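/- Let a, b ∈ ℝⁿ and suppose a is an upward transport of b. Then the isotonic projection a⁺ majorizes b⁺ in the natural order. -/

import Mathlib

open Finset

/-- The isotonic cone `{x : x₁ ≥ x₂ ≥ ⋯ ≥ xₙ}` in `ℝⁿ`. -/
def isoCone (n : ℕ) : Set (EuclideanSpace ℝ (Fin n)) :=
  {x | ∀ i j : Fin n, i ≤ j → x j ≤ x i}

/-- `p` is the metric (Euclidean) projection of `y` onto `S`. -/
def IsProjOn {n : ℕ} (S : Set (EuclideanSpace ℝ (Fin n)))
    (y p : EuclideanSpace ℝ (Fin n)) : Prop :=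
  p ∈ S ∧ ∀ r ∈ S, ‖y - p‖ ≤ ‖y - r‖

/-- `a` majorizes `b` in the natural order: every initial partial sum of `a`
is at least that of `b`, with equality for the total sums. -/
def MajNO {n : ℕ} (a b : Fin n → ℝ) : Prop :=
  (∀ k : Fin n, ∑ i ∈ Finset.Iic k, b i ≤ ∑ i ∈ Finset.Iic k, a i) ∧
  ∑ i, a i = ∑ i, b i

/-- `a` is an upward transport of `b`: `a` is obtained from `b` by moving some mass
from entry `j` to an earlier entry `i < j`. -/
def UpwardTransport {n : ℕ} (a b : Fin n → ℝ) : Prop :=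
  ∃ i j : Fin n, i < j ∧ (∀ k, k ≠ i → k ≠ j → a k = b k) ∧
    a i + a j = b i + b j ∧ b i ≤ a i

/-!
In terms of partial sums `S x m = x₁ + ⋯ + xₘ`, membership in the isotonic cone is concavity of
`S x`, and `S y⁺` is the least concave majorant of `S y` with the same endpoints. Hence
`S a⁺ ≥ S a ≥ S b` is a concave majorant of `S b`, so it dominates the least one, `S b⁺`.
Minimality is a discrete maximum principle: where `S b⁺` exceeds another concave majorant of `S b`
it is strictly above `S b`, so `b⁺` is locally constant there and the difference of the two is
convex; a difference that vanishes at both endpoints then cannot be positive.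
-/

open scoped RealInnerProductSpace

lemma nonpos_of_sub_le_sub_of_pos {G : Type*} [AddCommGroup G] [LinearOrder G]
    [IsOrderedAddMonoid G] {f : ℕ → G} {n : ℕ} (h₀ : f 0 ≤ 0) (hn : f n ≤ 0)
    (hf : ∀ m, m + 2 ≤ n → 0 < f (m + 1) → f (m + 1) - f m ≤ f (m + 2) - f (m + 1)) :
    ∀ m ≤ n, f m ≤ 0 := by
  cases n with
  | zero => simpa using h₀
  | succ n =>
    have nonpos_of_lt (m : ℕ) (hm : m ≤ n) : f m < f (m + 1) → f (m + 1) ≤ 0 := by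
      induction hm using Nat.decreasingInduction with
      | self => exact fun _ => hn
      | of_succ m hm ih =>
        intro hlt
        by_contra! hpos
        have hlt' : f (m + 1) < f (m + 2) :=
          sub_pos.1 ((sub_pos.2 hlt).trans_le (hf m (by lia) hpos))
        exact (hpos.trans hlt').not_ge (ih hlt')
    intro m hm
    induction m with
    | zero => exact h₀
    | succ m ih =>
      by_contra! hpos
      exact hpos.not_ge (nonpos_of_lt m (by lia) ((ih (by lia)).trans_lt hpos))

section Transport

variable {n : ℕ} {a b c : Fin n → ℝ}

lemma MajNO.trans (hab : MajNO a b) (hbc : MajNO b c) : MajNO a c :=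
  ⟨fun k => (hbc.1 k).trans (hab.1 k), hab.2.trans hbc.2⟩

lemma UpwardTransport.exists_eq_add_single_sub_single (h : UpwardTransport a b) :
    ∃ i j : Fin n, i < j ∧ ∃ d : ℝ, 0 ≤ d ∧ a = b + Pi.single i d - Pi.single j d := by
  obtain ⟨i, j, hij, hk, hsum, hi⟩ := h
  refine ⟨i, j, hij, a i - b i, sub_nonneg.2 hi, funext fun k => ?_⟩
  rcases eq_or_ne k i with rfl | hki
  · simp [hij.ne]
  rcases eq_or_ne k j with rfl | hkj
  · simp only [Pi.sub_apply, Pi.add_apply, Pi.single_eq_same, Pi.single_eq_of_ne hki]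
    linarith
  · simp [hki, hkj, hk k hki hkj]

lemma UpwardTransport.majNO (h : UpwardTransport a b) : MajNO a b := by
  obtain ⟨i, j, hij, d, hd, rfl⟩ := h.exists_eq_add_single_sub_single
  refine ⟨fun k => ?_, by simp [Finset.sum_add_distrib, Finset.sum_sub_distrib]⟩
  have hjk : j ≤ k → i ≤ k := hij.le.trans
  simp only [Pi.sub_apply, Pi.add_apply, Finset.sum_add_distrib, Finset.sum_sub_distrib,
    Finset.sum_pi_single', Finset.mem_Iic]
  split_ifs <;> first | linarith | tauto

end Transport

/-- The sum of the first `m` entries of `x`, that is, of those with (zero-based) index below `m`.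
It is indexed by natural numbers, with value `∑ i, x i` for `m ≥ n`. -/
def prefixSum {M : Type*} [AddCommMonoid M] {n : ℕ} (x : Fin n → M) (m : ℕ) : M :=
  ∑ i with i.val < m, x i

section PrefixSum

variable {M : Type*} [AddCommMonoid M] {n : ℕ} (x : Fin n → M)

lemma prefixSum_zero : prefixSum x 0 = 0 := by
  simp [prefixSum]

lemma prefixSum_self : prefixSum x n = ∑ i, x i := by
  simp [prefixSum]

lemma prefixSum_succ (m : Fin n) : prefixSum x (m + 1) = prefixSum x m + x m := by
  have hfilter : ({i | i.val < m + 1} : Finset (Fin n)) =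
      insert m ({i | i.val < m} : Finset (Fin n)) := by
    grind
  rw [prefixSum, hfilter, Finset.sum_insert (by simp), add_comm, prefixSum]

lemma sum_Iic_eq_prefixSum (k : Fin n) : ∑ i ∈ Finset.Iic k, x i = prefixSum x (k + 1) := by
  have hfilter : Finset.Iic k = ({i | i.val < k + 1} : Finset (Fin n)) := by
    grind
  rw [hfilter, prefixSum]

lemma majNO_iff_prefixSum {a b : Fin n → ℝ} :
    MajNO a b ↔ (∀ m ≤ n, prefixSum b m ≤ prefixSum a m) ∧ prefixSum a n = prefixSum b n := by
  simp only [MajNO, sum_Iic_eq_prefixSum, prefixSum_self]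
  refine and_congr_left fun _ => ⟨fun h m hm => ?_, fun h k => h _ k.2⟩
  cases m with
  | zero => simp only [prefixSum_zero, le_refl]
  | succ m => exact h ⟨m, hm⟩

end PrefixSum

/-- The vector `(1, …, 1, 0, …, 0)` with `m` leading ones, which represents `prefixSum · m` as an
inner product. -/
noncomputable def prefixIndicator (n m : ℕ) : EuclideanSpace ℝ (Fin n) :=
  WithLp.toLp 2 fun i => if i.val < m then 1 else 0

lemma inner_prefixIndicator {n : ℕ} (x : EuclideanSpace ℝ (Fin n)) (m : ℕ) :
    ⟪x, prefixIndicator n m⟫ = prefixSum x m := by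
  simp [prefixIndicator, prefixSum, PiLp.inner_apply, Finset.sum_filter]

section IsoCone

variable {n : ℕ} {x y : EuclideanSpace ℝ (Fin n)}

lemma convex_isoCone (n : ℕ) : Convex ℝ (isoCone n) := by
  intro x hx y hy s t hs ht _ i j hij
  simp only [PiLp.add_apply, PiLp.smul_apply, smul_eq_mul]
  gcongr
  · exact hx i j hij
  · exact hy i j hij

lemma add_mem_isoCone (hx : x ∈ isoCone n) (hy : y ∈ isoCone n) : x + y ∈ isoCone n :=
  fun i j hij => add_le_add (hx i j hij) (hy i j hij)

lemma prefixIndicator_mem_isoCone (n m : ℕ) : prefixIndicator n m ∈ isoCone n := by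
  intro i j hij
  simp only [prefixIndicator]
  grind

lemma neg_prefixIndicator_self_mem_isoCone (n : ℕ) : -prefixIndicator n n ∈ isoCone n := by
  simp [isoCone, prefixIndicator]

lemma sub_smul_prefixIndicator_mem_isoCone (hx : x ∈ isoCone n) {i j : Fin n}
    (hij : i.val + 1 = j) : x - (x i - x j) • prefixIndicator n j ∈ isoCone n := by
  intro k l hkl
  have hxkl := hx k l hkl
  simp only [prefixIndicator, PiLp.sub_apply, PiLp.smul_apply, smul_eq_mul]
  split_ifs with hl hk hk
  · linarith
  · lia
  · have hki := hx k i (by lia)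
    have hjl := hx j l (by lia)
    linarith
  · linarith

end IsoCone

namespace IsProjOn

variable {n : ℕ} {y p q v : EuclideanSpace ℝ (Fin n)}

lemma inner_nonpos_of_add_mem {S : Set (EuclideanSpace ℝ (Fin n))} (hS : Convex ℝ S)
    (h : IsProjOn S y p) (hv : p + v ∈ S) : ⟪y - p, v⟫ ≤ 0 := by
  have : Nonempty S := ⟨⟨p, h.1⟩⟩
  have hinf : ‖y - p‖ = ⨅ w : S, ‖y - w‖ :=
    le_antisymm (le_ciInf fun w => h.2 w w.2)
      (ciInf_le ⟨0, by rintro _ ⟨w, rfl⟩; exact norm_nonneg _⟩ (⟨p, h.1⟩ : S))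
  simpa using (norm_eq_iInf_iff_real_inner_le_zero hS h.1).1 hinf (p + v) hv

lemma prefixSum_le (h : IsProjOn (isoCone n) y p) (m : ℕ) : prefixSum y m ≤ prefixSum p m := by
  have hinner := h.inner_nonpos_of_add_mem (convex_isoCone n)
    (add_mem_isoCone h.1 (prefixIndicator_mem_isoCone n m))
  rwa [inner_sub_left, inner_prefixIndicator, inner_prefixIndicator, sub_nonpos] at hinner

lemma majNO (h : IsProjOn (isoCone n) y p) : MajNO p y := by
  refine majNO_iff_prefixSum.2 ⟨fun m _ => h.prefixSum_le m, (h.prefixSum_le n).antisymm' ?_⟩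
  have hinner := h.inner_nonpos_of_add_mem (convex_isoCone n)
    (add_mem_isoCone h.1 (neg_prefixIndicator_self_mem_isoCone n))
  rwa [inner_neg_right, inner_sub_left, inner_prefixIndicator, inner_prefixIndicator, neg_sub,
    sub_nonpos] at hinner

lemma prefixSum_eq_of_lt (h : IsProjOn (isoCone n) y p) {i j : Fin n} (hij : i.val + 1 = j)
    (hlt : p j < p i) : prefixSum p j = prefixSum y j := by
  have hmem := sub_smul_prefixIndicator_mem_isoCone h.1 hij
  rw [sub_eq_add_neg] at hmem
  have hinner := h.inner_nonpos_of_add_mem (convex_isoCone n) hmem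
  rw [inner_neg_right, neg_nonpos, inner_smul_right, mul_nonneg_iff_of_pos_left (sub_pos.2 hlt),
    inner_sub_left, inner_prefixIndicator, inner_prefixIndicator, sub_nonneg] at hinner
  exact hinner.antisymm (h.prefixSum_le j)

lemma majNO_of_mem_isoCone (h : IsProjOn (isoCone n) y p) (hq : q ∈ isoCone n)
    (hqy : MajNO q y) : MajNO q p := by
  obtain ⟨hle, -⟩ := majNO_iff_prefixSum.1 hqy
  have htotal : prefixSum q n = prefixSum p n := by
    simpa only [prefixSum_self] using hqy.2.trans h.majNO.2.symm
  suffices ∀ m ≤ n, prefixSum p m - prefixSum q m ≤ 0 from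
    majNO_iff_prefixSum.2 ⟨fun m hm => sub_nonpos.1 (this m hm), htotal⟩
  refine nonpos_of_sub_le_sub_of_pos (by simp [prefixSum_zero]) (by simp [htotal]) ?_
  intro m hm hpos
  let i : Fin n := ⟨m, by lia⟩
  let j : Fin n := ⟨m + 1, hm⟩
  have hp : p i ≤ p j := by
    by_contra! hlt
    have hcontact : prefixSum p (m + 1) = prefixSum y (m + 1) :=
      h.prefixSum_eq_of_lt (i := i) (j := j) rfl hlt
    linarith [hle (m + 1) (by lia)]
  have hq' : q j ≤ q i := hq i j (Fin.le_def.2 m.le_succ)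
  have hpi : prefixSum p (m + 1) = prefixSum p m + p i := prefixSum_succ p i
  have hpj : prefixSum p (m + 2) = prefixSum p (m + 1) + p j := prefixSum_succ p j
  have hqi : prefixSum q (m + 1) = prefixSum q m + q i := prefixSum_succ q i
  have hqj : prefixSum q (m + 2) = prefixSum q (m + 1) + q j := prefixSum_succ q j
  linarith

end IsProjOn

theorem isoProj_majNO_of_upwardTransport_general {n : ℕ} {a b ap bp : EuclideanSpace ℝ (Fin n)}
    (hab : MajNO a b) (hap : IsProjOn (isoCone n) a ap) (hbp : IsProjOn (isoCone n) b bp) :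
    MajNO ap bp :=
  hbp.majNO_of_mem_isoCone hap.1 (hap.majNO.trans hab)

/-- Lemma 6.6 (`lm:swap`): if `a` is an upward transport of `b`, then the isotonic
projections satisfy `a⁺ ≽ₙₒ b⁺`. -/
theorem isoProj_majNO_of_upwardTransport {n : ℕ} (a b ap bp : EuclideanSpace ℝ (Fin n))
    (hab : UpwardTransport a b)
    (hap : IsProjOn (isoCone n) a ap) (hbp : IsProjOn (isoCone n) b bp) :
    MajNO ap bp :=
  isoProj_majNO_of_upwardTransport_general hab.majNO hap hbp
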